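/- Assume 0 ≤ α < N, p, q > 0, μ ∈ ℝ, ρ > 0, and that the Dirichlet eigenpair hypothesis holds for (Ω, λ₁, φ). If p + q ≤ 1, then the inequality (E): −Δu − μ|x|^{−2}u ≥ (|x|^{−α} * u^p) u^q has no positive solution in C_Ω^ρ. -/

import Mathlib

open MeasureTheory Real Set
open scoped ENNReal NNReal

noncomputable section

/-- Euclidean space `ℝ^N`. -/
abbrev Euc (N : ℕ) := EuclideanSpace ℝ (Fin N)

/-- The Euclidean Laplacian `Δu(x) = ∑ ∂²u/∂xᵢ²(x)`, the trace of the Hessian. -/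
def lap (N : ℕ) (u : Euc N → ℝ) (x : Euc N) : ℝ :=
  ∑ i : Fin N,
    iteratedFDeriv ℝ 2 u x ![EuclideanSpace.single i 1, EuclideanSpace.single i 1]

/-- The open cone `C_Ω^ρ = {x : |x| > ρ, x/|x| ∈ Ω}`. -/
def coneGT (N : ℕ) (ρ : ℝ) (Ω : Set (Euc N)) : Set (Euc N) :=
  {x | ρ < ‖x‖ ∧ ‖x‖⁻¹ • x ∈ Ω}

/-- The full open cone `C_Ω = {x ≠ 0 : x/|x| ∈ Ω}`. -/
def cone (N : ℕ) (Ω : Set (Euc N)) : Set (Euc N) :=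
  {x | x ≠ 0 ∧ ‖x‖⁻¹ • x ∈ Ω}

/-- `Ω` is a nonempty, connected, relatively open subset of the unit sphere `S^{N-1}`. -/
def IsConeDomain (N : ℕ) (Ω : Set (Euc N)) : Prop :=
  Ω ⊆ Metric.sphere (0 : Euc N) 1 ∧ IsConnected Ω ∧
    IsOpen {ω : Metric.sphere (0 : Euc N) 1 | (ω : Euc N) ∈ Ω}

/-- The convolution `(|x|^{-α} * f)(x) = ∫_{C_Ω^ρ} f(y)|x-y|^{-α} dy`, valued in `[0,∞]`. -/
def rieszConv (N : ℕ) (α ρ : ℝ) (Ω : Set (Euc N)) (f : Euc N → ℝ) (x : Euc N) : ℝ≥0∞ :=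
  ∫⁻ y in coneGT N ρ Ω, ENNReal.ofReal (f y * ‖x - y‖ ^ (-α))

/-- Dirichlet eigenpair hypothesis for `(Ω, λ₁, φ)`: `φ` is continuous on the closure of `Ω`,
positive on `Ω`, vanishing on the relative boundary, with maximum `1`, and its 0-homogeneous
extension `Φ(x) = φ(x/|x|)` is `C²` on the open cone and satisfies `ΔΦ = -λ₁|x|⁻²Φ`. -/
structure DirichletEigenpair (N : ℕ) (Ω : Set (Euc N)) (lam1 : ℝ) (φ : Euc N → ℝ) : Prop where
  contOn : ContinuousOn φ (closure Ω)
  pos : ∀ ω ∈ Ω, 0 < φ ω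
  bdryZero : ∀ ω ∈ closure Ω \ Ω, φ ω = 0
  le_one : ∀ ω ∈ closure Ω, φ ω ≤ 1
  max_one : ∃ ω ∈ closure Ω, φ ω = 1
  smoothExt : ContDiffOn ℝ 2 (fun x => φ (‖x‖⁻¹ • x)) (cone N Ω)
  eigen : ∀ x ∈ cone N Ω,
    lap N (fun y => φ (‖y‖⁻¹ • y)) x = -lam1 * ‖x‖ ^ (-(2:ℝ)) * φ (‖x‖⁻¹ • x)

/-- The Hardy constant `C_{H,Ω} = λ₁ + ((N-2)/2)²`. -/
def CHconst (N : ℕ) (lam1 : ℝ) : ℝ := lam1 + (((N : ℝ) - 2) / 2) ^ 2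

/-- The smaller root `γ_*` of `γ(γ + N - 2) = λ₁ - μ`. -/
def gammaStar (N : ℕ) (lam1 μ : ℝ) : ℝ :=
  (-((N : ℝ) - 2) - Real.sqrt (((N : ℝ) - 2) ^ 2 + 4 * (lam1 - μ))) / 2

/-- A positive (classical) solution of `(E) : -Δu - μ|x|⁻²u ≥ (|x|^{-α} * uᵖ) u^q` in `C_Ω^ρ`. -/
def IsPosSolE (N : ℕ) (ρ μ α p q : ℝ) (Ω : Set (Euc N)) (u : Euc N → ℝ) : Prop :=
  ContDiffOn ℝ 2 u (coneGT N ρ Ω) ∧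
  ContinuousOn u (closure (coneGT N ρ Ω)) ∧
  (∀ x ∈ coneGT N ρ Ω, 0 < u x) ∧
  (∀ x ∈ coneGT N ρ Ω, rieszConv N α ρ Ω (fun y => u y ^ p) x < ⊤) ∧
  (∀ x ∈ coneGT N ρ Ω,
    (rieszConv N α ρ Ω (fun y => u y ^ p) x).toReal * u x ^ q ≤
      -lap N u x - μ * ‖x‖ ^ (-(2:ℝ)) * u x)

/-- A positive solution of `(Z) : -Δu - μ|x|⁻²u ≥ (∫_{C_Ω^ρ} uᵖ) u^q` in `C_Ω^ρ`. -/
def IsPosSolZ (N : ℕ) (ρ μ p q : ℝ) (Ω : Set (Euc N)) (u : Euc N → ℝ) : Prop :=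
  ContDiffOn ℝ 2 u (coneGT N ρ Ω) ∧
  ContinuousOn u (closure (coneGT N ρ Ω)) ∧
  (∀ x ∈ coneGT N ρ Ω, 0 < u x) ∧
  (∫⁻ y in coneGT N ρ Ω, ENNReal.ofReal (u y ^ p)) < ⊤ ∧
  (∀ x ∈ coneGT N ρ Ω,
    (∫⁻ y in coneGT N ρ Ω, ENNReal.ofReal (u y ^ p)).toReal * u x ^ q ≤
      -lap N u x - μ * ‖x‖ ^ (-(2:ℝ)) * u x)

/-- A positive solution `(u, v)` of the system `(S)` in `C_Ω^ρ`. -/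
def IsPosSolS (N : ℕ) (ρ μ α p q s : ℝ) (Ω : Set (Euc N)) (u v : Euc N → ℝ) : Prop :=
  ContDiffOn ℝ 2 u (coneGT N ρ Ω) ∧ ContinuousOn u (closure (coneGT N ρ Ω)) ∧
  ContDiffOn ℝ 2 v (coneGT N ρ Ω) ∧ ContinuousOn v (closure (coneGT N ρ Ω)) ∧
  (∀ x ∈ coneGT N ρ Ω, 0 < u x) ∧ (∀ x ∈ coneGT N ρ Ω, 0 < v x) ∧
  (∀ x ∈ coneGT N ρ Ω, rieszConv N α ρ Ω (fun y => v y ^ p) x < ⊤) ∧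
  (∀ x ∈ coneGT N ρ Ω,
    (rieszConv N α ρ Ω (fun y => v y ^ p) x).toReal * v x ^ q ≤
      -lap N u x - μ * ‖x‖ ^ (-(2:ℝ)) * u x) ∧
  (∀ x ∈ coneGT N ρ Ω, u x ^ s ≤ -lap N v x - μ * ‖x‖ ^ (-(2:ℝ)) * v x)

/-!
Dividing `(E)` by `u` gives `-Δu/u ≥ (|x|^{-α} * u^p) u^{q-1} - |μ|/|x|²`. For a test function `η`,
`∫ η² (-Δu/u) ≤ ∫ |∇η|²`: with `w = ∂ᵥu / u`, Riccati's identity `∂ᵥ²u / u = ∂ᵥw + w²` and an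
integration by parts reduce this to completing the square in `2 η w ∂ᵥη - η² w²`.

Take for `η` a cutoff at a ball `B` of radius `r` inside the cone, at distance comparable to `r`
from the apex, so that `∫ |∇η|² ≤ C r⁻² |B|`. The kernel is at least `(k r)^{-α}` on `B`, for a
constant `k`. Evaluating the convolution at one fixed point therefore gives
`(k r)^{-α} ∫_B u^p ≤ K`, so the average `T` of `u^p` over `B` is at most `1` once
`(k r)^{-α} |B| ≥ K`, which holds for large `r` since `α < N`. As `(1 - q) / p ≥ 1`, Jensen's
inequality bounds the average of `u^{q-1}` over `B` below by `T^{-(1-q)/p} ≥ T⁻¹`. The convolution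
term then contributes at least `(k r)^{-α} |B|²`, while everything else is `O(r⁻² |B|)`; but
`(k r)^{-α} |B|` is unbounded.
-/

open Filter Metric Module
open scoped Laplacian Topology

section IntegrationByParts

variable {E : Type*} [NormedAddCommGroup E] [MeasurableSpace E] [BorelSpace E] {μ : Measure E}

lemma integrable_of_continuousOn_tsupport {F : Type*} [Zero F] [IsFiniteMeasureOnCompacts μ]
    {f : E → ℝ} {η : E → F}
    (hc : HasCompactSupport η) (hf : ContinuousOn f (tsupport η)) (h0 : ∀ x, η x = 0 → f x = 0) :
    Integrable f μ := by
  have hsupp : Function.support f ⊆ tsupport η :=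
    fun x hx ↦ subset_tsupport η fun hηx ↦ hx (h0 x hηx)
  rw [← integrableOn_iff_integrable_of_support_subset hsupp]
  exact hf.integrableOn_compact hc

lemma integrable_sq_mul_of_continuousOn [IsFiniteMeasureOnCompacts μ] {U : Set E} {f η : E → ℝ}
    (hf : ContinuousOn f U) (hη : Continuous η) (hc : HasCompactSupport η) (hs : tsupport η ⊆ U) :
    Integrable (fun x ↦ η x ^ 2 * f x) μ :=
  integrable_of_continuousOn_tsupport hc ((hη.continuousOn.pow 2).mul (hf.mono hs))
    fun x hx ↦ by simp [hx]

variable [NormedSpace ℝ E]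

lemma integrable_fderiv_apply_sq [IsFiniteMeasureOnCompacts μ] {η : E → ℝ} (hη : ContDiff ℝ 1 η)
    (hc : HasCompactSupport η) (v : E) : Integrable (fun x ↦ fderiv ℝ η x v ^ 2) μ :=
  integrable_of_continuousOn_tsupport (hc.fderiv_apply (𝕜 := ℝ) v)
    ((((hη.continuous_fderiv one_ne_zero).clm_apply continuous_const).pow 2).continuousOn)
    fun x hx ↦ by simp [hx]

variable [FiniteDimensional ℝ E] [μ.IsAddHaarMeasure]

lemma integral_sq_mul_neg_fderiv_sub_sq_le {U : Set E} (hU : IsOpen U) {w η : E → ℝ}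
    (hw : ContDiffOn ℝ 1 w U) (hη : ContDiff ℝ 1 η) (hc : HasCompactSupport η)
    (hs : tsupport η ⊆ U) (v : E) :
    ∫ x, η x ^ 2 * (-fderiv ℝ w x v - w x ^ 2) ∂μ ≤ ∫ x, fderiv ℝ η x v ^ 2 ∂μ := by
  have cont_dη : Continuous fun x ↦ fderiv ℝ η x v :=
    (hη.continuous_fderiv one_ne_zero).clm_apply continuous_const
  have cont_dw : ContinuousOn (fun x ↦ fderiv ℝ w x v) U :=
    (hw.continuousOn_fderiv_of_isOpen hU le_rfl).clm_apply continuousOn_const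
  have int_w := integrable_sq_mul_of_continuousOn (μ := μ) hw.continuousOn hη.continuous hc hs
  have int_dw := integrable_sq_mul_of_continuousOn (μ := μ) cont_dw hη.continuous hc hs
  have int_sq : Integrable (fun x ↦ η x ^ 2 * w x ^ 2) μ :=
    integrable_sq_mul_of_continuousOn (hw.continuousOn.pow 2) hη.continuous hc hs
  have int_cross : Integrable (fun x ↦ 2 * η x * fderiv ℝ η x v * w x) μ :=
    integrable_of_continuousOn_tsupport hc
      (((hη.continuous.const_mul 2).mul cont_dη).continuousOn.mul (hw.continuousOn.mono hs))
      fun x hx ↦ by simp [hx]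
  have deriv_sq (x : E) : fderiv ℝ (fun y ↦ η y ^ 2) x v = 2 * η x * fderiv ℝ η x v := by
    simp [((hη.differentiable one_ne_zero x).hasFDerivAt.pow 2).fderiv]
  have hsupp : tsupport (fun x ↦ η x ^ 2) ⊆ U := by
    simpa only [sq] using tsupport_mul_subset_left.trans hs
  have by_parts : ∫ x, η x ^ 2 * fderiv ℝ w x v ∂μ =
      -∫ x, 2 * η x * fderiv ℝ η x v * w x ∂μ := by
    simp only [← deriv_sq] at int_cross ⊢
    exact integral_mul_fderiv_eq_neg_fderiv_mul_of_integrable int_cross int_dw int_w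
      (fun x _ ↦ (hη.differentiable one_ne_zero x).pow 2)
      (fun x hx ↦ (hw.contDiffAt (hU.mem_nhds (hsupp hx))).differentiableAt one_ne_zero)
  calc ∫ x, η x ^ 2 * (-fderiv ℝ w x v - w x ^ 2) ∂μ
      = ∫ x, (2 * η x * fderiv ℝ η x v * w x - η x ^ 2 * w x ^ 2) ∂μ := by
        simp only [mul_sub, mul_neg]
        rw [integral_sub int_dw.fun_neg int_sq, integral_sub int_cross int_sq, integral_neg,
          by_parts, neg_neg]
    _ ≤ ∫ x, fderiv ℝ η x v ^ 2 ∂μ :=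
        integral_mono (int_cross.sub int_sq) (integrable_fderiv_apply_sq hη hc v) fun x ↦ by
          nlinarith [sq_nonneg (η x * w x - fderiv ℝ η x v)]

end IntegrationByParts

lemma fderiv_fderiv_apply_div_self {E : Type*} [NormedAddCommGroup E] [NormedSpace ℝ E]
    {u : E → ℝ} {x : E} (hu : ContDiffAt ℝ 2 u x) (hx : u x ≠ 0) (v : E) :
    fderiv ℝ (fun y ↦ fderiv ℝ u y v / u y) x v =
      iteratedFDeriv ℝ 2 u x ![v, v] / u x - (fderiv ℝ u x v / u x) ^ 2 := by
  have hd : HasFDerivAt u (fderiv ℝ u x) x := (hu.differentiableAt two_ne_zero).hasFDerivAt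
  have hd' : HasFDerivAt (fderiv ℝ u) (fderiv ℝ (fderiv ℝ u) x) x :=
    ((hu.fderiv_right (m := 1) (by norm_num)).differentiableAt one_ne_zero).hasFDerivAt
  have hlog : HasFDerivAt (fun y ↦ fderiv ℝ u y v * (u y)⁻¹) _ x :=
    (hd'.clm_apply (hasFDerivAt_const v x)).mul ((hasDerivAt_inv hx).comp_hasFDerivAt x hd)
  simp only [div_eq_mul_inv]
  rw [hlog.fderiv, iteratedFDeriv_two_apply]
  simp only [neg_smul, smul_neg, ContinuousLinearMap.comp_zero, zero_add, add_apply, neg_apply,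
    smul_apply, smul_eq_mul, ContinuousLinearMap.flip_apply, Matrix.cons_val_zero,
    Matrix.cons_val_one]
  field_simp
  ring

lemma exists_contDiff_cutoff (E : Type*) [NormedAddCommGroup E] [NormedSpace ℝ E]
    [FiniteDimensional ℝ E] :
    ∃ K : ℝ, ∀ (c : E) {r : ℝ}, 0 < r → ∃ η : E → ℝ, ContDiff ℝ 1 η ∧ HasCompactSupport η ∧
      tsupport η ⊆ ball c (2 * r) ∧ (∀ x, η x ∈ Icc 0 1) ∧ EqOn η 1 (closedBall c r) ∧
      ∀ x, ‖fderiv ℝ η x‖ ≤ K / r := by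
  let f : ContDiffBump (0 : E) := ⟨1, 3 / 2, one_pos, by norm_num⟩
  have hf : ContDiff ℝ 1 f := f.contDiff
  obtain ⟨K, hK⟩ := (f.hasCompactSupport.fderiv (𝕜 := ℝ)).exists_bound_of_continuous
    (hf.continuous_fderiv one_ne_zero)
  refine ⟨K, fun c r hr ↦ ?_⟩
  let η : E → ℝ := fun x ↦ f (r⁻¹ • (x - c))
  have norm_scaled (x : E) : ‖r⁻¹ • (x - c)‖ = dist x c / r := by
    rw [norm_smul, norm_inv, Real.norm_of_nonneg hr.le, inv_mul_eq_div, dist_eq_norm]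
  have hsupp : tsupport η ⊆ closedBall c (3 / 2 * r) := by
    refine closure_minimal (fun x hx ↦ ?_) isClosed_closedBall
    by_contra hfar
    refine hx (f.zero_of_le_dist ?_)
    rw [dist_zero_right, norm_scaled, le_div_iff₀ hr]
    exact (not_le.1 hfar).le
  refine ⟨η, hf.comp (by fun_prop), .intro' (isCompact_closedBall c (3 / 2 * r))
    isClosed_closedBall fun x hx ↦ image_eq_zero_of_notMem_tsupport fun h ↦ hx (hsupp h),
    hsupp.trans (closedBall_subset_ball (by linarith)), fun x ↦ ⟨f.nonneg, f.le_one⟩,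
    fun x hx ↦ f.one_of_mem_closedBall ?_, fun x ↦ ?_⟩
  · rwa [mem_closedBall_zero_iff, norm_scaled, div_le_one hr]
  · have hfderiv : fderiv ℝ η x = r⁻¹ • fderiv ℝ f (r⁻¹ • (x - c)) := by
      simp only [η, fderiv_comp_sub (f := fun y ↦ f (r⁻¹ • y)), fderiv_comp_smul]
    rw [hfderiv, norm_smul, norm_inv, Real.norm_of_nonneg hr.le, inv_mul_eq_div]
    gcongr
    exact hK _

section Supersolution

variable {E : Type*} [NormedAddCommGroup E] [InnerProductSpace ℝ E] [FiniteDimensional ℝ E]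
  [MeasurableSpace E] [BorelSpace E] {μ : Measure E} [μ.IsAddHaarMeasure]

lemma integral_sq_mul_neg_laplacian_div_le {U : Set E} (hU : IsOpen U) {u η : E → ℝ}
    (hu : ContDiffOn ℝ 2 u U) (hpos : ∀ x ∈ U, 0 < u x) (hη : ContDiff ℝ 1 η)
    (hc : HasCompactSupport η) (hs : tsupport η ⊆ U) :
    Integrable (fun x ↦ η x ^ 2 * (-Δ u x / u x)) μ ∧
      ∫ x, η x ^ 2 * (-Δ u x / u x) ∂μ ≤ ∫ x, ‖fderiv ℝ η x‖ ^ 2 ∂μ := by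
  let e := stdOrthonormalBasis ℝ E
  let w (i) (x : E) : ℝ := fderiv ℝ u x (e i) / u x
  have hw (i) : ContDiffOn ℝ 1 (w i) U :=
    ((hu.fderiv_of_isOpen hU (by norm_num)).clm_apply contDiffOn_const).div
      (hu.of_le (by norm_num)) fun x hx ↦ (hpos x hx).ne'
  have riccati (x : E) : η x ^ 2 * (-Δ u x / u x) =
      ∑ i, η x ^ 2 * (-fderiv ℝ (w i) x (e i) - w i x ^ 2) := by
    by_cases hx : x ∈ U
    · have hux := hu.contDiffAt (hU.mem_nhds hx)
      rw [InnerProductSpace.laplacian_eq_iteratedFDeriv_orthonormalBasis u e, ← Finset.mul_sum]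
      simp only [w, fderiv_fderiv_apply_div_self hux (hpos x hx).ne', neg_sub, sub_sub_cancel_left,
        ← Finset.sum_neg_distrib, Finset.sum_div, neg_div]
    · simp [image_eq_zero_of_notMem_tsupport fun h ↦ hx (hs h)]
  have int_term (i) : Integrable (fun x ↦ η x ^ 2 * (-fderiv ℝ (w i) x (e i) - w i x ^ 2)) μ := by
    have hcont : ContinuousOn (fun x ↦ -fderiv ℝ (w i) x (e i) - w i x ^ 2) U :=
      (((hw i).continuousOn_fderiv_of_isOpen hU le_rfl).clm_apply continuousOn_const).neg.sub
        ((hw i).continuousOn.pow 2)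
    exact integrable_sq_mul_of_continuousOn hcont hη.continuous hc hs
  simp only [riccati, e.norm_dual]
  refine ⟨integrable_finsetSum _ fun i _ ↦ int_term i, ?_⟩
  rw [integral_finsetSum _ fun i _ ↦ int_term i,
    integral_finsetSum _ fun i _ ↦ integrable_fderiv_apply_sq hη hc (e i)]
  exact Finset.sum_le_sum fun i _ ↦
    integral_sq_mul_neg_fderiv_sub_sq_le hU (hw i) hη hc hs (e i)

/-- The easy half of the Agmon–Allegretto–Piepenbrink principle. -/
lemma integral_sq_mul_le_of_supersolution {U : Set E} (hU : IsOpen U) {u V η : E → ℝ}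
    (hu : ContDiffOn ℝ 2 u U) (hpos : ∀ x ∈ U, 0 < u x) (hV : ContinuousOn V U)
    (hVu : ∀ x ∈ U, V x * u x ≤ -Δ u x) (hη : ContDiff ℝ 1 η) (hc : HasCompactSupport η)
    (hs : tsupport η ⊆ U) :
    ∫ x, η x ^ 2 * V x ∂μ ≤ ∫ x, ‖fderiv ℝ η x‖ ^ 2 ∂μ := by
  obtain ⟨hint, hle⟩ := integral_sq_mul_neg_laplacian_div_le (μ := μ) hU hu hpos hη hc hs
  have int_V : Integrable (fun x ↦ η x ^ 2 * V x) μ :=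
    integrable_sq_mul_of_continuousOn hV hη.continuous hc hs
  refine (integral_mono int_V hint fun x ↦ ?_).trans hle
  by_cases hx : x ∈ U
  · exact mul_le_mul_of_nonneg_left ((le_div_iff₀ (hpos x hx)).2 (hVu x hx)) (sq_nonneg _)
  · simp [image_eq_zero_of_notMem_tsupport fun h ↦ hx (hs h)]

lemma setIntegral_le_of_supersolution {U s : Set E} (hU : IsOpen U) (hs : MeasurableSet s)
    {u f η : E → ℝ} {a : ℝ} (hu : ContDiffOn ℝ 2 u U) (hpos : ∀ x ∈ U, 0 < u x)
    (hf : ContinuousOn f U) (hf0 : ∀ x ∈ U, 0 ≤ f x)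
    (hfu : ∀ x ∈ U, f x * u x ≤ -Δ u x + a * u x) (hη : ContDiff ℝ 1 η)
    (hc : HasCompactSupport η) (hηU : tsupport η ⊆ U) (hη1 : EqOn η 1 s) :
    ∫ x in s, f x ∂μ ≤ ∫ x, (η x ^ 2 * a + ‖fderiv ℝ η x‖ ^ 2) ∂μ := by
  have int_f : Integrable (fun x ↦ η x ^ 2 * f x) μ :=
    integrable_sq_mul_of_continuousOn hf hη.continuous hc hηU
  have int_a : Integrable (fun x ↦ η x ^ 2 * a) μ :=
    integrable_sq_mul_of_continuousOn continuousOn_const hη.continuous hc hηU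
  have int_grad : Integrable (fun x ↦ ‖fderiv ℝ η x‖ ^ 2) μ :=
    integrable_of_continuousOn_tsupport (hc.fderiv (𝕜 := ℝ))
      ((hη.continuous_fderiv one_ne_zero).norm.pow 2).continuousOn fun x hx ↦ by simp [hx]
  have energy : ∫ x, η x ^ 2 * (f x - a) ∂μ ≤ ∫ x, ‖fderiv ℝ η x‖ ^ 2 ∂μ :=
    integral_sq_mul_le_of_supersolution hU hu hpos (hf.sub continuousOn_const)
      (fun x hx ↦ by linarith [hfu x hx]) hη hc hηU
  simp only [mul_sub] at energy
  rw [integral_sub int_f int_a] at energy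
  calc ∫ x in s, f x ∂μ
      = ∫ x in s, η x ^ 2 * f x ∂μ := setIntegral_congr_fun hs fun x hx ↦ by simp [hη1 hx]
    _ ≤ ∫ x, η x ^ 2 * f x ∂μ := setIntegral_le_integral int_f <| .of_forall fun x ↦ by
        by_cases hx : x ∈ U
        · exact mul_nonneg (sq_nonneg _) (hf0 x hx)
        · simp [image_eq_zero_of_notMem_tsupport fun h ↦ hx (hηU h)]
    _ ≤ ∫ x, (η x ^ 2 * a + ‖fderiv ℝ η x‖ ^ 2) ∂μ := by
        rw [integral_add int_a int_grad]
        linarith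

lemma exists_setIntegral_closedBall_le_of_supersolution (μ : Measure E) [μ.IsAddHaarMeasure] :
    ∃ C : ℝ, 0 ≤ C ∧ ∀ {u f : E → ℝ} {c : E} {r a : ℝ}, 0 < r → 0 ≤ a →
      ContDiffOn ℝ 2 u (ball c (2 * r)) → (∀ x ∈ ball c (2 * r), 0 < u x) →
      ContinuousOn f (ball c (2 * r)) → (∀ x ∈ ball c (2 * r), 0 ≤ f x) →
      (∀ x ∈ ball c (2 * r), f x * u x ≤ -Δ u x + a * u x) →
      ∫ x in closedBall c r, f x ∂μ ≤ (a + C / r ^ 2) * μ.real (closedBall c (2 * r)) := by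
  obtain ⟨K, hK⟩ := exists_contDiff_cutoff E
  refine ⟨K ^ 2, sq_nonneg K, fun {u f c r a} hr ha hu hpos hf hf0 hfu ↦ ?_⟩
  obtain ⟨η, hη, hc, hs, hη01, hη1, hdη⟩ := hK c hr
  have hbound (x : E) : ‖η x ^ 2 * a + ‖fderiv ℝ η x‖ ^ 2‖ ≤ a + K ^ 2 / r ^ 2 := by
    rw [Real.norm_of_nonneg (by positivity), ← div_pow]
    gcongr
    · exact mul_le_of_le_one_left ha (pow_le_one₀ (hη01 x).1 (hη01 x).2)
    · exact hdη x
  have hvanish (x) (hx : x ∉ closedBall c (2 * r)) : η x ^ 2 * a + ‖fderiv ℝ η x‖ ^ 2 = 0 := by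
    have hx : x ∉ ball c (2 * r) := fun h ↦ hx (ball_subset_closedBall h)
    simp [image_eq_zero_of_notMem_tsupport fun h ↦ hx (hs h),
      image_eq_zero_of_notMem_tsupport fun h ↦ hx (hs (tsupport_fderiv_subset ℝ h))]
  calc ∫ x in closedBall c r, f x ∂μ
      ≤ ∫ x, (η x ^ 2 * a + ‖fderiv ℝ η x‖ ^ 2) ∂μ :=
        setIntegral_le_of_supersolution isOpen_ball measurableSet_closedBall hu hpos hf hf0 hfu
          hη hc hs hη1
    _ = ∫ x in closedBall c (2 * r), (η x ^ 2 * a + ‖fderiv ℝ η x‖ ^ 2) ∂μ :=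
        (setIntegral_eq_integral_of_forall_compl_eq_zero hvanish).symm
    _ ≤ (a + K ^ 2 / r ^ 2) * μ.real (closedBall c (2 * r)) :=
        (le_abs_self _).trans <| norm_setIntegral_le_of_norm_le_const
          measure_closedBall_lt_top fun x _ ↦ hbound x

end Supersolution

section Jensen

lemma one_sub_mul_le_rpow_neg {t s : ℝ} (ht : 0 < t) (hs : 0 ≤ s) :
    1 - s * (t - 1) ≤ t ^ (-s) := by
  calc 1 - s * (t - 1) ≤ log t * -s + 1 := by nlinarith [log_le_sub_one_of_pos ht]
    _ ≤ exp (log t * -s) := add_one_le_exp _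
    _ = t ^ (-s) := (rpow_def_of_pos ht _).symm

variable {X : Type*} [MeasurableSpace X] {μ : Measure X}

lemma integral_pos_of_ae_pos [NeZero μ] {f : X → ℝ} (hf : ∀ᵐ x ∂μ, 0 < f x)
    (hfi : Integrable f μ) : 0 < ∫ x, f x ∂μ := by
  have hf0 : 0 ≤ᵐ[μ] f := hf.mono fun x hx ↦ hx.le
  refine (integral_nonneg_of_ae hf0).lt_of_ne' fun h ↦ ?_
  obtain ⟨x, hx, hx0⟩ := (hf.and ((integral_eq_zero_iff_of_nonneg_ae hf0 hfi).1 h)).exists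
  exact hx.ne' hx0

lemma rpow_neg_integral_le [IsProbabilityMeasure μ] {f : X → ℝ} {s : ℝ} (hs : 0 ≤ s)
    (hf : ∀ᵐ x ∂μ, 0 < f x) (hfi : Integrable f μ) (hfs : Integrable (fun x ↦ f x ^ (-s)) μ) :
    (∫ x, f x ∂μ) ^ (-s) ≤ ∫ x, f x ^ (-s) ∂μ := by
  set T := ∫ x, f x ∂μ
  have hT : 0 < T := integral_pos_of_ae_pos hf hfi
  have bernoulli : ∀ᵐ x ∂μ, T ^ (-s) * (1 - s * (f x / T - 1)) ≤ f x ^ (-s) := by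
    filter_upwards [hf] with x hx
    calc T ^ (-s) * (1 - s * (f x / T - 1))
        ≤ T ^ (-s) * (f x / T) ^ (-s) := by
          gcongr
          exact one_sub_mul_le_rpow_neg (div_pos hx hT) hs
      _ = f x ^ (-s) := by rw [← mul_rpow hT.le (div_pos hx hT).le, mul_div_cancel₀ _ hT.ne']
  calc T ^ (-s) = ∫ x, T ^ (-s) * (1 - s * (f x / T - 1)) ∂μ := by
        rw [integral_const_mul, integral_sub (by fun_prop) (by fun_prop), integral_const_mul,
          integral_sub (by fun_prop) (by fun_prop), integral_div]
        simp [T, div_self hT.ne']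
    _ ≤ ∫ x, f x ^ (-s) ∂μ := integral_mono_ae (by fun_prop) hfs bernoulli

lemma one_le_average_mul_average_rpow_neg [IsFiniteMeasure μ] [NeZero μ] {f : X → ℝ} {s : ℝ}
    (hs : 1 ≤ s) (hf : ∀ᵐ x ∂μ, 0 < f x) (hfi : Integrable f μ)
    (hfs : Integrable (fun x ↦ f x ^ (-s)) μ) (hle : ⨍ x, f x ∂μ ≤ 1) :
    1 ≤ (⨍ x, f x ∂μ) * ⨍ x, f x ^ (-s) ∂μ := by
  have hf' : ∀ᵐ x ∂(μ univ)⁻¹ • μ, 0 < f x := Measure.ae_smul_measure hf _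
  have hT : 0 < ⨍ x, f x ∂μ := integral_pos_of_ae_pos hf' hfi.to_average
  calc (1 : ℝ) = (⨍ x, f x ∂μ) * (⨍ x, f x ∂μ) ^ (-1 : ℝ) := by
        rw [rpow_neg_one, mul_inv_cancel₀ hT.ne']
    _ ≤ (⨍ x, f x ∂μ) * (⨍ x, f x ∂μ) ^ (-s) := by
        gcongr (_ * ?_)
        exact rpow_le_rpow_of_exponent_ge hT hle (by linarith)
    _ ≤ (⨍ x, f x ∂μ) * ⨍ x, f x ^ (-s) ∂μ := by
        gcongr
        exact rpow_neg_integral_le (by linarith) hf' hfi.to_average hfs.to_average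

lemma one_le_setAverage_rpow_mul_setAverage_rpow_sub_one {s : Set X} (hs : MeasurableSet s)
    (hs0 : μ s ≠ 0) (hs_top : μ s ≠ ⊤) {u : X → ℝ} (hu : ∀ x ∈ s, 0 < u x) {p q : ℝ} (hp : 0 < p)
    (hpq : p + q ≤ 1) (hup : IntegrableOn (fun x ↦ u x ^ p) s μ)
    (huq : IntegrableOn (fun x ↦ u x ^ (q - 1)) s μ) (hle : ⨍ x in s, u x ^ p ∂μ ≤ 1) :
    1 ≤ (⨍ x in s, u x ^ p ∂μ) * ⨍ x in s, u x ^ (q - 1) ∂μ := by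
  have : NeZero (μ.restrict s) := ⟨by simpa using hs0⟩
  have : IsFiniteMeasure (μ.restrict s) := isFiniteMeasure_restrict.2 hs_top
  have hrpow : EqOn (fun x ↦ u x ^ (q - 1)) (fun x ↦ (u x ^ p) ^ (-((1 - q) / p))) s := by
    intro x hx
    simp only [← rpow_mul (hu x hx).le]
    congr 1
    field_simp
    ring
  rw [setAverage_congr_fun hs (.of_forall hrpow)]
  exact one_le_average_mul_average_rpow_neg ((one_le_div hp).2 (by linarith))
    (ae_restrict_of_forall_mem hs fun x hx ↦ rpow_pos_of_pos (hu x hx) p) hup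
    (huq.congr_fun hrpow hs) hle

end Jensen

section MassEstimate

variable {E : Type*} [NormedAddCommGroup E] [InnerProductSpace ℝ E] [FiniteDimensional ℝ E]
  [MeasurableSpace E] [BorelSpace E]

lemma exists_mul_measureReal_closedBall_le (μ : Measure E) [μ.IsAddHaarMeasure] :
    ∃ C : ℝ, 0 ≤ C ∧ ∀ {u : E → ℝ} {c : E} {r a m p q : ℝ}, 0 < r → 0 ≤ a → 0 ≤ m →
      0 < p → p + q ≤ 1 → ContDiffOn ℝ 2 u (ball c (2 * r)) → (∀ x ∈ ball c (2 * r), 0 < u x) →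
      ⨍ y in closedBall c r, u y ^ p ∂μ ≤ 1 →
      (∀ x ∈ ball c (2 * r),
        m * (∫ y in closedBall c r, u y ^ p ∂μ) * u x ^ q ≤ -Δ u x + a * u x) →
      m * μ.real (closedBall c r) ≤ 2 ^ finrank ℝ E * (a + C / r ^ 2) := by
  obtain ⟨C, hC0, hC⟩ := exists_setIntegral_closedBall_le_of_supersolution μ
  refine ⟨C, hC0, fun {u c r a m p q} hr ha hm hp hpq hu hpos havg hsuper ↦ ?_⟩
  set B := closedBall c r
  have hBball : B ⊆ ball c (2 * r) := closedBall_subset_ball (by linarith)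
  have hposB : ∀ x ∈ B, 0 < u x := fun x hx ↦ hpos x (hBball hx)
  have hB0 : μ B ≠ 0 := (measure_closedBall_pos μ c hr).ne'
  have hB_top : μ B ≠ ⊤ := measure_closedBall_lt_top.ne
  have cont_rpow (e : ℝ) : ContinuousOn (fun x ↦ u x ^ e) (ball c (2 * r)) :=
    hu.continuousOn.rpow_const fun x hx ↦ .inl (hpos x hx).ne'
  have int_rpow (e : ℝ) : IntegrableOn (fun x ↦ u x ^ e) B μ :=
    ((cont_rpow e).mono hBball).integrableOn_compact (isCompact_closedBall c r)
  have jensen : 1 ≤ (⨍ y in B, u y ^ p ∂μ) * ⨍ y in B, u y ^ (q - 1) ∂μ :=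
    one_le_setAverage_rpow_mul_setAverage_rpow_sub_one measurableSet_closedBall hB0 hB_top hposB
      hp hpq (int_rpow p) (int_rpow (q - 1)) havg
  have mass_nonneg : 0 ≤ ∫ y in B, u y ^ p ∂μ :=
    setIntegral_nonneg measurableSet_closedBall fun y hy ↦ rpow_nonneg (hposB y hy).le p
  have upper := hC (f := fun x ↦ m * (∫ y in B, u y ^ p ∂μ) * u x ^ (q - 1)) hr ha hu hpos
    ((cont_rpow (q - 1)).const_mul _)
    (fun x hx ↦ mul_nonneg (mul_nonneg hm mass_nonneg) (rpow_nonneg (hpos x hx).le _))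
    fun x hx ↦ by
      rw [mul_assoc, ← rpow_add_one (hpos x hx).ne', sub_add_cancel]
      exact hsuper x hx
  refine le_of_mul_le_mul_right ?_ (ENNReal.toReal_pos hB0 hB_top)
  calc m * μ.real B * μ.real B
      ≤ m * μ.real B * μ.real B * ((⨍ y in B, u y ^ p ∂μ) * ⨍ y in B, u y ^ (q - 1) ∂μ) :=
        le_mul_of_one_le_right (by positivity) jensen
    _ = ∫ x in B, m * (∫ y in B, u y ^ p ∂μ) * u x ^ (q - 1) ∂μ := by
        rw [integral_const_mul, setAverage_eq, setAverage_eq, smul_eq_mul, smul_eq_mul]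
        have : μ.real B ≠ 0 := (ENNReal.toReal_pos hB0 hB_top).ne'
        field_simp
    _ ≤ (a + C / r ^ 2) * μ.real (closedBall c (2 * r)) := upper
    _ = 2 ^ finrank ℝ E * (a + C / r ^ 2) * μ.real B := by
        rw [Measure.addHaar_real_closedBall' μ c hr.le,
          Measure.addHaar_real_closedBall' μ c (by positivity)]
        ring

lemma tendsto_rpow_neg_mul_measureReal_closedBall_atTop (μ : Measure E) [μ.IsAddHaarMeasure]
    {α k : ℝ} (hα : α < finrank ℝ E) (hk : 0 < k) (c : ℝ → E) :
    Tendsto (fun r ↦ (k * r) ^ (-α) * μ.real (closedBall (c r) r)) atTop atTop := by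
  have hV : 0 < μ.real (closedBall (0 : E) 1) :=
    ENNReal.toReal_pos (measure_closedBall_pos μ 0 one_pos).ne' measure_closedBall_lt_top.ne
  have hpow := (tendsto_rpow_atTop (sub_pos.2 hα)).const_mul_atTop
    (mul_pos (rpow_pos_of_pos hk (-α)) hV)
  refine hpow.congr' ?_
  filter_upwards [eventually_gt_atTop 0] with r hr
  rw [Measure.addHaar_real_closedBall' μ _ hr.le, mul_rpow hk.le hr.le, sub_eq_neg_add,
    rpow_add hr, rpow_natCast]
  ring

end MassEstimate

lemma ofReal_rpow_neg_mul_setIntegral_le_setLIntegral {E : Type*} [NormedAddCommGroup E]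
    [MeasurableSpace E] {μ : Measure E} [NullSingletonClass μ] {s : Set E} (hs : MeasurableSet s)
    {f : E → ℝ} (hf : ∀ y ∈ s, 0 ≤ f y) (hfi : IntegrableOn f s μ) {x : E} {α D : ℝ}
    (hα : 0 ≤ α) (hD : 0 ≤ D) (hx : ∀ y ∈ s, ‖x - y‖ ≤ D) :
    ENNReal.ofReal (D ^ (-α) * ∫ y in s, f y ∂μ) ≤
      ∫⁻ y in s, ENNReal.ofReal (f y * ‖x - y‖ ^ (-α)) ∂μ := by
  rw [← integral_const_mul, ofReal_integral_eq_lintegral_ofReal (hfi.const_mul _)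
    (ae_restrict_of_forall_mem hs fun y hy ↦ mul_nonneg (rpow_nonneg hD _) (hf y hy))]
  have hne : ∀ᵐ y ∂μ, y ≠ x := by simp [ae_iff]
  refine lintegral_mono_ae ?_
  filter_upwards [ae_restrict_mem hs, ae_restrict_of_ae hne] with y hy hyx
  rw [mul_comm]
  gcongr ENNReal.ofReal (_ * ?_)
  · exact hf y hy
  · exact rpow_le_rpow_of_nonpos (norm_sub_pos_iff.2 hyx.symm) (hx y hy) (neg_nonpos.2 hα)

lemma exists_forall_closedBall_smul_subset {E : Type*} [NormedAddCommGroup E] [NormedSpace ℝ E]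
    {S : Set E} (hS : IsOpen S) (hne : S.Nonempty)
    (hsmul : ∀ t : ℝ, 0 < t → ∀ x ∈ S, t • x ∈ S) {s : ℝ} (hs : 0 < s) :
    ∃ z : E, ∀ r : ℝ, 0 < r → closedBall (r • z) (s * r) ⊆ S := by
  obtain ⟨y, hy⟩ := hne
  obtain ⟨ε, hε, hball⟩ := nhds_basis_closedBall.mem_iff.1 (hS.mem_nhds hy)
  refine ⟨(s / ε) • y, fun r hr ↦ ?_⟩
  have ht : 0 < r * (s / ε) := by positivity
  have hradius : s * r = ‖r * (s / ε)‖ * ε := by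
    rw [Real.norm_of_nonneg ht.le]
    field_simp
  rw [smul_smul, hradius, ← smul_closedBall _ _ hε.le]
  rintro _ ⟨x, hx, rfl⟩
  exact hsmul _ ht x (hball hx)

section Cone

variable {N : ℕ} {Ω : Set (Euc N)}

lemma lap_eq_laplacian (u : Euc N → ℝ) : lap N u = Δ u := by
  ext x
  simp [lap, InnerProductSpace.laplacian_eq_iteratedFDeriv_orthonormalBasis u
    (EuclideanSpace.basisFun (Fin N) ℝ)]

lemma isOpen_cone (hΩ : IsOpen {ω : sphere (0 : Euc N) 1 | (ω : Euc N) ∈ Ω}) :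
    IsOpen (cone N Ω) := by
  obtain ⟨O, hO, hOΩ⟩ := isOpen_induced_iff.1 hΩ
  have hcone : cone N Ω = {x | x ≠ 0} ∩ (fun x ↦ ‖x‖⁻¹ • x) ⁻¹' O := by
    ext x
    refine and_congr_right fun hx ↦ ?_
    have hmem : ‖x‖⁻¹ • x ∈ sphere (0 : Euc N) 1 := by simp [norm_smul, hx]
    exact (Set.ext_iff.1 hOΩ ⟨_, hmem⟩).symm
  rw [hcone]
  refine ContinuousOn.isOpen_inter_preimage ?_ isOpen_ne hO
  exact (continuous_norm.continuousOn.inv₀ fun x hx ↦ norm_ne_zero_iff.2 hx).smul continuousOn_id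

lemma smul_mem_cone {t : ℝ} (ht : 0 < t) {x : Euc N} (hx : x ∈ cone N Ω) : t • x ∈ cone N Ω := by
  refine ⟨smul_ne_zero ht.ne' hx.1, ?_⟩
  rw [norm_smul, Real.norm_of_nonneg ht.le, smul_smul, mul_inv_rev, inv_mul_cancel_right₀ ht.ne']
  exact hx.2

lemma nonempty_cone (hΩ : Ω ⊆ sphere 0 1) (hne : Ω.Nonempty) : (cone N Ω).Nonempty := by
  obtain ⟨ω, hω⟩ := hne
  have hnorm : ‖ω‖ = 1 := by simpa using hΩ hω
  exact ⟨ω, norm_ne_zero_iff.1 (by simp [hnorm]), by simpa [hnorm] using hω⟩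

lemma exists_forall_ball_smul_subset_coneGT (hΩ : Ω ⊆ sphere 0 1) (hne : Ω.Nonempty)
    (hopen : IsOpen {ω : sphere (0 : Euc N) 1 | (ω : Euc N) ∈ Ω}) :
    ∃ z : Euc N, ∀ {r ρ : ℝ}, 0 < r → ρ < r →
      ball (r • z) (2 * r) ⊆ coneGT N ρ Ω ∩ {x | r ≤ ‖x‖} := by
  obtain ⟨z, hz⟩ := exists_forall_closedBall_smul_subset (isOpen_cone hopen)
    (nonempty_cone hΩ hne) (fun t ht x hx ↦ smul_mem_cone ht hx) three_pos
  refine ⟨z, fun {r ρ} hr hρ x hx ↦ ?_⟩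
  have norm_center : 3 * r < ‖r • z‖ := by
    by_contra! hle
    exact (hz r hr (mem_closedBall'.2 (by rwa [dist_zero_right]))).1 rfl
  rw [mem_ball_iff_norm'] at hx
  have hxr : r ≤ ‖x‖ := by linarith [norm_sub_norm_le (r • z) x]
  have hx_cone : x ∈ cone N Ω := hz r hr (mem_closedBall_iff_norm'.2 (by linarith))
  exact ⟨⟨hρ.trans_le hxr, hx_cone.2⟩, hxr⟩

end Cone

namespace IsPosSolE

variable {N : ℕ} {ρ μ α p q : ℝ} {Ω : Set (Euc N)} {u : Euc N → ℝ}

lemma rpow_neg_mul_setIntegral_le [Nontrivial (Euc N)] (hu : IsPosSolE N ρ μ α p q Ω u)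
    (hα : 0 ≤ α) {B : Set (Euc N)} (hB : IsCompact B) (hBΩ : B ⊆ coneGT N ρ Ω) {x : Euc N}
    (hx : x ∈ coneGT N ρ Ω) {D : ℝ} (hD : 0 ≤ D) (hxB : ∀ y ∈ B, ‖x - y‖ ≤ D) :
    D ^ (-α) * ∫ y in B, u y ^ p ≤ (rieszConv N α ρ Ω (fun y ↦ u y ^ p) x).toReal := by
  obtain ⟨smooth, -, pos, finite, -⟩ := hu
  have cont_rpow : ContinuousOn (fun y ↦ u y ^ p) B :=
    (smooth.continuousOn.mono hBΩ).rpow_const fun y hy ↦ .inl (pos y (hBΩ hy)).ne'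
  rw [← ENNReal.ofReal_le_iff_le_toReal (finite x hx).ne]
  exact (ofReal_rpow_neg_mul_setIntegral_le_setLIntegral hB.measurableSet
    (fun y hy ↦ rpow_nonneg (pos y (hBΩ hy)).le p) (cont_rpow.integrableOn_compact hB) hα hD
    hxB).trans (lintegral_mono_set hBΩ)

lemma rieszConv_mul_rpow_le (hu : IsPosSolE N ρ μ α p q Ω u) {x : Euc N}
    (hx : x ∈ coneGT N ρ Ω) {r : ℝ} (hr : 0 < r) (hrx : r ≤ ‖x‖) :
    (rieszConv N α ρ Ω (fun y ↦ u y ^ p) x).toReal * u x ^ q ≤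
      -Δ u x + |μ| / r ^ 2 * u x := by
  obtain ⟨-, -, pos, -, ineq⟩ := hu
  have hpotential : -μ * ‖x‖ ^ (-(2 : ℝ)) ≤ |μ| / r ^ 2 := by
    rw [rpow_neg (norm_nonneg x), rpow_two, ← div_eq_mul_inv]
    gcongr
    exact neg_le_abs μ
  have := ineq x hx
  rw [lap_eq_laplacian] at this
  linarith [mul_le_mul_of_nonneg_right hpotential (pos x hx).le]

lemma setAverage_rpow_le_one [Nontrivial (Euc N)] (hu : IsPosSolE N ρ μ α p q Ω u) (hα : 0 ≤ α)
    {B : Set (Euc N)} (hB : IsCompact B) (hBΩ : B ⊆ coneGT N ρ Ω) {x : Euc N}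
    (hx : x ∈ coneGT N ρ Ω) {D : ℝ} (hD : 0 < D) (hxB : ∀ y ∈ B, ‖x - y‖ ≤ D)
    (hle : (rieszConv N α ρ Ω (fun y ↦ u y ^ p) x).toReal ≤ D ^ (-α) * volume.real B) :
    ⨍ y in B, u y ^ p ≤ 1 := by
  have hmass : ∫ y in B, u y ^ p ≤ volume.real B :=
    le_of_mul_le_mul_left ((hu.rpow_neg_mul_setIntegral_le hα hB hBΩ hx hD.le hxB).trans hle)
      (rpow_pos_of_pos hD _)
  rw [setAverage_eq]
  exact inv_mul_le_one_of_le₀ hmass measureReal_nonneg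

end IsPosSolE

lemma exists_rpow_neg_mul_volume_closedBall_le_of_isPosSolE (N : ℕ) [Nontrivial (Euc N)] (μ : ℝ) :
    ∃ C : ℝ, 0 ≤ C ∧ ∀ {ρ α p q : ℝ} {Ω : Set (Euc N)} {u : Euc N → ℝ},
      IsPosSolE N ρ μ α p q Ω u → 0 ≤ α → 0 < p → p + q ≤ 1 → ∀ {c : Euc N} {r D : ℝ}, 0 < r →
      3 * r ≤ D → ball c (2 * r) ⊆ coneGT N ρ Ω ∩ {x | r ≤ ‖x‖} →
      ⨍ y in closedBall c r, u y ^ p ≤ 1 →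
      D ^ (-α) * volume.real (closedBall c r) ≤ C / r ^ 2 := by
  obtain ⟨C, hC0, hC⟩ := exists_mul_measureReal_closedBall_le (volume : Measure (Euc N))
  refine ⟨2 ^ N * (|μ| + C), by positivity,
    fun {ρ α p q Ω u} hu hα hp hpq {c r D} hr hD hball havg ↦ ?_⟩
  have hsub : closedBall c r ⊆ ball c (2 * r) := closedBall_subset_ball (by linarith)
  have hcone : ball c (2 * r) ⊆ coneGT N ρ Ω := fun x hx ↦ (hball hx).1
  have hdist : ∀ x ∈ ball c (2 * r), ∀ y ∈ closedBall c r, ‖x - y‖ ≤ D := fun x hx y hy ↦ by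
    rw [← dist_eq_norm]
    linarith [dist_triangle_right x y c, mem_ball.1 hx, mem_closedBall.1 hy]
  have hD0 : 0 ≤ D := by linarith
  have bound := hC hr (by positivity : 0 ≤ |μ| / r ^ 2) (rpow_nonneg hD0 (-α)) hp hpq
    (hu.1.mono hcone) (fun x hx ↦ hu.2.2.1 x (hcone hx)) havg fun x hx ↦ by
      refine le_trans ?_ (hu.rieszConv_mul_rpow_le (hcone hx) hr (hball hx).2)
      gcongr
      · exact rpow_nonneg (hu.2.2.1 x (hcone hx)).le q
      · exact hu.rpow_neg_mul_setIntegral_le hα (isCompact_closedBall c r) (hsub.trans hcone)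
          (hcone hx) hD0 (hdist x hx)
  rwa [finrank_euclideanSpace_fin, ← add_div, ← mul_div_assoc] at bound

theorem no_solution_of_pq_le_one_general {N : ℕ} {Ω : Set (Euc N)} (hΩ : Ω ⊆ sphere 0 1)
    (hne : Ω.Nonempty) (hopen : IsOpen {ω : sphere (0 : Euc N) 1 | (ω : Euc N) ∈ Ω})
    {α p q ρ μ : ℝ} (hα : 0 ≤ α) (hαN : α < N) (hp : 0 < p) (hpq : p + q ≤ 1) :
    ¬ ∃ u : Euc N → ℝ, IsPosSolE N ρ μ α p q Ω u := by
  rintro ⟨u, hu⟩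
  have : NeZero N := ⟨by rintro rfl; exact hα.not_gt (by simpa using hαN)⟩
  obtain ⟨C, hC0, hC⟩ := exists_rpow_neg_mul_volume_closedBall_le_of_isPosSolE N μ
  obtain ⟨z, hz⟩ := exists_forall_ball_smul_subset_coneGT hΩ hne hopen
  obtain ⟨x₀, hx₀⟩ : (coneGT N ρ Ω).Nonempty :=
    ⟨max 1 (ρ + 1) • z, (hz (by positivity) (by simp) (mem_ball_self (by positivity))).1⟩
  have growth := tendsto_rpow_neg_mul_measureReal_closedBall_atTop (volume : Measure (Euc N))
    (by rwa [finrank_euclideanSpace_fin]) (by positivity : 0 < ‖z‖ + 3) (· • z)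
  obtain ⟨r, hmass, hr1, hrρ, hrx₀⟩ := ((growth.eventually_ge_atTop (max
    (rieszConv N α ρ Ω (fun y ↦ u y ^ p) x₀).toReal (C + 1))).and <| (eventually_ge_atTop 1).and <|
    (eventually_gt_atTop ρ).and <| eventually_ge_atTop ‖x₀‖).exists
  have hr : 0 < r := by linarith
  have hD : 3 * r ≤ (‖z‖ + 3) * r := by gcongr; simp
  have hball := hz hr hrρ
  have hdist : ∀ y ∈ closedBall (r • z) r, ‖x₀ - y‖ ≤ (‖z‖ + 3) * r := fun y hy ↦ by
    have hcenter : ‖r • z‖ = r * ‖z‖ := by rw [norm_smul, Real.norm_of_nonneg hr.le]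
    linarith [norm_sub_le x₀ y, norm_le_norm_add_norm_sub (r • z) y, mem_closedBall_iff_norm.1 hy,
      norm_sub_rev y (r • z)]
  have havg : ⨍ y in closedBall (r • z) r, u y ^ p ≤ 1 :=
    hu.setAverage_rpow_le_one hα (isCompact_closedBall _ r)
      (fun x hx ↦ (hball (closedBall_subset_ball (by linarith) hx)).1) hx₀ (by positivity) hdist
      (le_of_max_le_left hmass)
  have hle_C : C / r ^ 2 ≤ C := div_le_self hC0 (one_le_pow₀ hr1)
  linarith [hC hu hα hp hpq hr hD hball havg, le_of_max_le_right hmass]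

/-- Step 1 of Theorem 1.1(b)(ii): if `p + q ≤ 1` then `(E)` has no positive
solution in `C_Ω^ρ`. -/
theorem no_solution_of_pq_le_one
    (N : ℕ) (hN : 2 ≤ N) (Ω : Set (Euc N)) (hΩ : IsConeDomain N Ω)
    (lam1 : ℝ) (φ : Euc N → ℝ) (hphi : DirichletEigenpair N Ω lam1 φ)
    (α p q ρ μ : ℝ) (hα : 0 ≤ α) (hαN : α < N) (hp : 0 < p) (hq : 0 < q) (hρ : 0 < ρ)
    (hpq : p + q ≤ 1) :
    ¬ ∃ u : Euc N → ℝ, IsPosSolE N ρ μ α p q Ω u :=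
  no_solution_of_pq_le_one_general hΩ.1 hΩ.2.1.nonempty hΩ.2.2 hα hαN hp hpq
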